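/- For every odd integer d ≥ 1 there exists p ∈ 𝓗 in 2 variables of degree d with d = 2·N(p) − 3, and for every even integer d ≥ 2 there exists p ∈ 𝓗 in 2 variables of degree d with d = 2·N(p) − 4. -/

import Mathlib

/-! The witnesses come from the Lucas polynomials `L₀ = 2`, `L₁ = x`, `Lₙ₊₂ = x Lₙ₊₁ + y Lₙ`, which
express `aⁿ + bⁿ` through `x = a + b` and `y = -ab`. The recursion shows that the coefficients
of `Lₙ` are nonnegative and that the monomials occurring are exactly the `xⁱ yʲ` with `i + 2j = n`
(`lucas_coeff`). On the line `x + y = 1` one has `{a, b} = {1, -y}`, so `Lₙ = 1 + (-y)ⁿ` there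
(`lucas_eval`).

For odd `d = 2r + 1`, the polynomial `L_d + y^d` is therefore `1` on the line; it has degree `d` and
`(r + 1) + 1` monomials. Replacing the summand `y^d` by `y^d (x + y)` changes nothing on the line,
raises the degree by one and adds one monomial, which settles the even degree `d + 1`. -/

open MvPolynomial

/-- `𝓗`: polynomials with nonnegative coefficients that are `1`
on the hyperplane `x₁ + ⋯ + xₙ = 1`. -/
def InH (n : ℕ) (p : MvPolynomial (Fin n) ℝ) : Prop :=
  (∀ α : Fin n →₀ ℕ, 0 ≤ p.coeff α) ∧
  ∀ x : Fin n → ℝ, (∑ i, x i) = 1 → eval x p = 1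

/-- `N(p)`: the number of monomials of `p` with nonzero coefficient. -/
def Nmon {n : ℕ} (p : MvPolynomial (Fin n) ℝ) : ℕ := p.support.card

/-- The bivariate Lucas polynomials, with `x = X 0` and `y = X 1`. -/
noncomputable def lucas : ℕ → MvPolynomial (Fin 2) ℝ
  | 0 => 2
  | 1 => X 0
  | n + 2 => X 0 * lucas (n + 1) + X 1 * lucas n

/-- The exponent vector of `xⁱ yʲ`. -/
noncomputable def expo (i j : ℕ) : Fin 2 →₀ ℕ := Finsupp.single 0 i + Finsupp.single 1 j

lemma expo_zero (i j : ℕ) : expo i j 0 = i := by simp [expo]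

lemma expo_one (i j : ℕ) : expo i j 1 = j := by simp [expo]

lemma eq_expo_iff (m : Fin 2 →₀ ℕ) (i j : ℕ) : m = expo i j ↔ m 0 = i ∧ m 1 = j := by
  constructor
  · rintro rfl
    exact ⟨expo_zero i j, expo_one i j⟩
  · rintro ⟨h0, h1⟩
    ext k
    fin_cases k
    · simpa [expo_zero] using h0
    · simpa [expo_one] using h1

/-- The polynomial `Lₙ` is isobaric of weight `n` for the weights `1, 2` of `x, y`, and all the
coefficients allowed by this are positive. -/
lemma lucas_coeff (n : ℕ) : ∀ m : Fin 2 →₀ ℕ,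
    (m 0 + 2 * m 1 = n → 0 < (lucas n).coeff m) ∧
    (m 0 + 2 * m 1 ≠ n → (lucas n).coeff m = 0) := by
  induction n using Nat.twoStepInduction with
  | zero =>
    intro m
    have h2 : (2 : MvPolynomial (Fin 2) ℝ) = C 2 := (map_ofNat C 2).symm
    have hm : (0 = m) ↔ m 0 + 2 * m 1 = 0 := by
      rw [eq_comm, show (0 : Fin 2 →₀ ℕ) = expo 0 0 by simp [expo], eq_expo_iff]
      omega
    rw [lucas, h2, coeff_C]
    constructor
    · intro h
      rw [if_pos (hm.2 h)]
      norm_num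
    · intro h
      rw [if_neg (fun h' => h (hm.1 h'))]
  | one =>
    intro m
    have hm : (Finsupp.single 0 1 = m) ↔ m 0 + 2 * m 1 = 1 := by
      rw [eq_comm, show (Finsupp.single 0 1 : Fin 2 →₀ ℕ) = expo 1 0 by simp [expo], eq_expo_iff]
      omega
    rw [lucas, coeff_X]
    constructor
    · intro h
      rw [if_pos (hm.2 h)]
      norm_num
    · intro h
      rw [if_neg (fun h' => h (hm.1 h'))]
  | more n ih0 ih1 =>
    intro m
    rw [lucas, coeff_add, coeff_X_mul', coeff_X_mul']
    have A := ih1 (m - Finsupp.single 0 1)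
    have B := ih0 (m - Finsupp.single 1 1)
    have nonneg : ∀ {P : Prop} {c : ℝ}, (P → 0 < c) ∧ (¬ P → c = 0) → 0 ≤ c := by
      intro P c h
      by_cases hP : P
      · exact (h.1 hP).le
      · exact (h.2 hP).ge
    have A0 := nonneg A
    have B0 := nonneg B
    simp only [Finsupp.coe_tsub, Pi.sub_apply, Finsupp.single_apply, Finsupp.mem_support_iff,
      Fin.isValue, one_ne_zero, zero_ne_one, if_true, if_false, ne_eq, tsub_zero] at A B ⊢
    by_cases h0 : m 0 = 0 <;> by_cases h1 : m 1 = 0 <;> simp only [h0, h1, not_true, not_false_iff,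
      if_true, if_false] at A B ⊢
    · constructor <;> intro h
      · omega
      · simp
    · constructor <;> intro h
      · have := B.1 (by omega)
        linarith
      · rw [B.2 (by omega), add_zero]
    · constructor <;> intro h
      · have := A.1 (by omega)
        linarith
      · rw [A.2 (by omega), add_zero]
    · constructor <;> intro h
      · have := A.1 (by omega)
        linarith
      · rw [A.2 (by omega), B.2 (by omega), add_zero]

lemma lucas_coeff_nonneg (n : ℕ) (m : Fin 2 →₀ ℕ) : 0 ≤ (lucas n).coeff m := by
  by_cases h : m 0 + 2 * m 1 = n
  · exact ((lucas_coeff n m).1 h).le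
  · exact ((lucas_coeff n m).2 h).ge

lemma lucas_eval (x : Fin 2 → ℝ) (hx : x 0 + x 1 = 1) (n : ℕ) :
    eval x (lucas n) = 1 + (-x 1) ^ n := by
  have h0 : x 0 = 1 - x 1 := by linarith
  induction n using Nat.twoStepInduction with
  | zero => simp [lucas]; norm_num
  | one => simp [lucas, h0]; ring
  | more n ih0 ih1 =>
    rw [lucas, map_add, map_mul, map_mul, ih0, ih1, eval_X, eval_X, h0]
    ring

/-- The exponent vectors of `L_{2r+1}`. -/
noncomputable def lucasSupp (r : ℕ) : Finset (Fin 2 →₀ ℕ) :=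
  (Finset.range (r + 1)).image fun k => expo (2 * r + 1 - 2 * k) k

lemma mem_lucasSupp (r : ℕ) (m : Fin 2 →₀ ℕ) :
    m ∈ lucasSupp r ↔ m 0 + 2 * m 1 = 2 * r + 1 := by
  simp only [lucasSupp, Finset.mem_image, Finset.mem_range]
  constructor
  · rintro ⟨k, hk, rfl⟩
    rw [expo_zero, expo_one]
    omega
  · intro h
    refine ⟨m 1, by omega, ((eq_expo_iff _ _ _).2 ⟨by omega, rfl⟩).symm⟩

lemma card_lucasSupp (r : ℕ) : (lucasSupp r).card = r + 1 := by
  rw [lucasSupp, Finset.card_image_of_injective, Finset.card_range]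
  intro a b h
  have := congrArg (fun m : Fin 2 →₀ ℕ => m 1) h
  simpa [expo_one] using this

lemma eval_expo (x : Fin 2 → ℝ) (i j : ℕ) :
    eval x (monomial (expo i j) (1 : ℝ)) = x 0 ^ i * x 1 ^ j := by
  rw [expo, eval_monomial, Finsupp.prod_add_index' (by simp) (by intros; rw [pow_add])]
  simp

/-- All coefficients involved are nonnegative, so no cancellation occurs and the support of the sum
is the union of the supports. -/
lemma support_lucas_add (r : ℕ) (T : Finset (Fin 2 →₀ ℕ)) :
    (∀ m, 0 ≤ (lucas (2 * r + 1) + ∑ t ∈ T, monomial t (1 : ℝ)).coeff m) ∧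
    (lucas (2 * r + 1) + ∑ t ∈ T, monomial t (1 : ℝ)).support = lucasSupp r ∪ T := by
  have hc : ∀ m, (lucas (2 * r + 1) + ∑ t ∈ T, monomial t (1 : ℝ)).coeff m
      = (lucas (2 * r + 1)).coeff m + if m ∈ T then 1 else 0 := by
    intro m
    rw [coeff_add, coeff_sum]
    simp [coeff_monomial]
  constructor
  · intro m
    rw [hc]
    have := lucas_coeff_nonneg (2 * r + 1) m
    split_ifs <;> linarith
  · ext m
    rw [mem_support_iff, hc, Finset.mem_union, mem_lucasSupp]
    have h1 := lucas_coeff (2 * r + 1) m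
    have h0 := lucas_coeff_nonneg (2 * r + 1) m
    by_cases hT : m ∈ T
    · simp only [hT, if_true, or_true, iff_true]
      linarith
    · simp only [hT, if_false, or_false, add_zero]
      by_cases hm : m 0 + 2 * m 1 = 2 * r + 1
      · simp only [hm, iff_true]
        exact (h1.1 hm).ne'
      · simp only [hm, iff_false, not_not]
        exact h1.2 hm

/-- Adding to `L_{2r+1}` a set `T` of new monomials whose sum is `y^{2r+1}` on the line gives an
element of `𝓗`, with `r + 1 + |T|` monomials; its degree is read off from `T`. -/
lemma exists_of_finset (r d : ℕ) (T : Finset (Fin 2 →₀ ℕ))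
    (hT : ∀ t ∈ T, t 0 + 2 * t 1 ≠ 2 * r + 1)
    (hd : 2 * r + 1 ≤ d) (hle : ∀ t ∈ T, t 0 + t 1 ≤ d) (hex : ∃ t ∈ T, t 0 + t 1 = d)
    (hev : ∀ x : Fin 2 → ℝ, x 0 + x 1 = 1 →
      ∑ t ∈ T, eval x (monomial t (1 : ℝ)) = x 1 ^ (2 * r + 1)) :
    ∃ p : MvPolynomial (Fin 2) ℝ,
      InH 2 p ∧ p.totalDegree = d ∧ Nmon p = r + 1 + T.card := by
  obtain ⟨hn, hs⟩ := support_lucas_add r T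
  have hdeg : ∀ m : Fin 2 →₀ ℕ, (m.sum fun _ e => e) = m 0 + m 1 := by
    intro m
    rw [Finsupp.sum_fintype _ _ (by simp), Fin.sum_univ_two]
  refine ⟨_, ⟨hn, ?_⟩, ?_, ?_⟩
  · intro x hx
    rw [Fin.sum_univ_two] at hx
    rw [map_add, map_sum, hev x hx, lucas_eval x hx, Odd.neg_pow ⟨r, rfl⟩]
    ring
  · apply le_antisymm
    · rw [totalDegree, hs]
      refine Finset.sup_le fun m hm => ?_
      rw [hdeg]
      rcases Finset.mem_union.1 hm with h | h
      · have := (mem_lucasSupp r m).1 h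
        omega
      · exact hle m h
    · obtain ⟨t, ht, htd⟩ := hex
      rw [← htd, ← hdeg]
      apply le_totalDegree
      rw [hs]
      exact Finset.mem_union_right _ ht
  · rw [Nmon, hs, Finset.card_union_of_disjoint, card_lucasSupp]
    rw [Finset.disjoint_left]
    exact fun m hm hm' => hT m hm' ((mem_lucasSupp r m).1 hm)

/-- for every odd `d ≥ 1` there is `p ∈ 𝓗` in 2 variables of
degree `d` with `d = 2·N(p) − 3`, and for every even `d ≥ 2` there is
`p ∈ 𝓗` in 2 variables of degree `d` with `d = 2·N(p) − 4` (subtraction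
stated without truncation). -/
theorem stmt4 :
    (∀ d : ℕ, 1 ≤ d → Odd d →
      ∃ p : MvPolynomial (Fin 2) ℝ,
        InH 2 p ∧ p.totalDegree = d ∧ d + 3 = 2 * Nmon p) ∧
    (∀ d : ℕ, 2 ≤ d → Even d →
      ∃ p : MvPolynomial (Fin 2) ℝ,
        InH 2 p ∧ p.totalDegree = d ∧ d + 4 = 2 * Nmon p) := by
  constructor
  · rintro d - ⟨r, rfl⟩
    obtain ⟨p, hp, hpd, hN⟩ := exists_of_finset r (2 * r + 1) {expo 0 (2 * r + 1)}
      (by simp [expo_zero, expo_one]) le_rfl (by simp [expo_zero, expo_one])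
      (by simp [expo_zero, expo_one]) (by intro x _; simp [eval_expo])
    refine ⟨p, hp, hpd, ?_⟩
    rw [hN, Finset.card_singleton]
    ring
  · rintro d hd ⟨k, rfl⟩
    obtain ⟨r, rfl⟩ : ∃ r, k = r + 1 := ⟨k - 1, by omega⟩
    have hne : expo 1 (2 * r + 1) ≠ expo 0 (2 * r + 2) := by
      intro h
      have := ((eq_expo_iff _ _ _).1 h).1
      rw [expo_zero] at this
      omega
    obtain ⟨p, hp, hpd, hN⟩ := exists_of_finset r (r + 1 + (r + 1))
      {expo 1 (2 * r + 1), expo 0 (2 * r + 2)}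
      (by simp only [Finset.mem_insert, Finset.mem_singleton]
          rintro t (rfl | rfl) <;> rw [expo_zero, expo_one] <;> omega)
      (by omega)
      (by simp only [Finset.mem_insert, Finset.mem_singleton]
          rintro t (rfl | rfl) <;> rw [expo_zero, expo_one] <;> omega)
      ⟨expo 0 (2 * r + 2), by simp, by rw [expo_zero, expo_one]; omega⟩
      (by intro x hx
          rw [Finset.sum_pair hne, eval_expo, eval_expo]
          linear_combination x 1 ^ (2 * r + 1) * hx)
    refine ⟨p, hp, hpd, ?_⟩
    rw [hN, Finset.card_pair hne]
    ring
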